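/- arXiv:1805.07817 — 2 statements merged into one kernel-verified Lean document; each statement's English description precedes it below -/
import Mathlib

section
/- For a ternary group (A,[ ]) the following conditions are equivalent: (1) (A,[ ]) is idempotent, i.e., [aaa] = a for all a ∈ A; (2) (A,[ ]) is idempotent and knot-theoretic (satisfies (A3L) and (A3R)); (3) (A,[ ]) is Mal'cev, i.e., [abb] = [bba] = a for all a,b ∈ A. -/
variable {A : Type*}

/-- Associativity of a ternary operation. -/
def TernaryAssoc (f : A → A → A → A) : Prop :=
  ∀ a b c d e : A,
    f (f a b c) d e = f a (f b c d) e ∧ f a (f b c d) e = f a b (f c d e)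

/-- Ternary quasigroup: unique solvability in each coordinate. -/
def TernaryQuasigroup (f : A → A → A → A) : Prop :=
  (∀ a b c : A, ∃! z : A, f z a b = c) ∧
  (∀ a b c : A, ∃! z : A, f a z b = c) ∧
  (∀ a b c : A, ∃! z : A, f a b z = c)

/-- A ternary group is an associative ternary quasigroup. -/
def TernaryGroup (f : A → A → A → A) : Prop :=
  TernaryAssoc f ∧ TernaryQuasigroup f

/-- The axiom (A3L). -/
def A3L (f : A → A → A → A) : Prop :=
  ∀ a b c d : A, f (f a b c) c d = f (f a b (f b c d)) (f b c d) d

/-- The axiom (A3R). -/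
def A3R (f : A → A → A → A) : Prop :=
  ∀ a b c d : A, f a b (f b c d) = f a (f a b c) (f (f a b c) c d)

/-- Semi-commutativity: [abc] = [cba]. -/
def SemiComm (f : A → A → A → A) : Prop :=
  ∀ a b c : A, f a b c = f c b a

/-- A knot-theoretic ternary group. -/
def KnotTheoretic (f : A → A → A → A) : Prop :=
  TernaryGroup f ∧ A3L f ∧ A3R f

/-- `sk` is a skew-element operation: [a (sk a) a] = a. -/
def IsSkew (f : A → A → A → A) (sk : A → A) : Prop :=
  ∀ a : A, f a (sk a) a = a

/-- Entropic (medial) ternary operation. -/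
def Entropic (f : A → A → A → A) : Prop :=
  ∀ a₁ a₂ a₃ b₁ b₂ b₃ c₁ c₂ c₃ : A,
    f (f a₁ a₂ a₃) (f b₁ b₂ b₃) (f c₁ c₂ c₃) = f (f a₁ b₁ c₁) (f a₂ b₂ c₂) (f a₃ b₃ c₃)

/-!
Associativity and idempotence give `[[abb]bb] = [a[bbb]b] = [abb]`, so cancelling `b, b` on the
right yields `[abb] = a`; symmetrically `[bba] = a`. These identities remove a repeated adjacent
pair, so both sides of (A3L) collapse to `[abd]` and both sides of (A3R) to `[acd]`.
-/

namespace TernaryQuasigroup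

variable {f : A → A → A → A}

theorem injective_left (hf : TernaryQuasigroup f) (a b : A) :
    Function.Injective fun z => f z a b :=
  fun _ y h => (hf.1 a b (f y a b)).unique h rfl

theorem injective_right (hf : TernaryQuasigroup f) (a b : A) : Function.Injective (f a b) :=
  fun _ y h => (hf.2.2 a b (f a b y)).unique h rfl

end TernaryQuasigroup

namespace TernaryAssoc

variable {f : A → A → A → A}

theorem left_eq_right (hf : TernaryAssoc f) (a b c d e : A) :
    f (f a b c) d e = f a b (f c d e) :=
  (hf a b c d e).1.trans (hf a b c d e).2

theorem apply_pair_right_of_idempotent (hf : TernaryAssoc f) {b : A} (hb : f b b b = b)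
    (hinj : Function.Injective fun z => f z b b) (a : A) : f a b b = a := by
  apply hinj
  calc f (f a b b) b b = f a (f b b b) b := (hf a b b b b).1
    _ = f a b b := by rw [hb]

theorem apply_pair_left_of_idempotent (hf : TernaryAssoc f) {b : A} (hb : f b b b = b)
    (hinj : Function.Injective (f b b)) (a : A) : f b b a = a := by
  apply hinj
  calc f b b (f b b a) = f b (f b b b) a := (hf b b b b a).2.symm
    _ = f b b a := by rw [hb]

theorem cancel_pair_left (hf : TernaryAssoc f) {c d : A} (h : f c c d = d) (a b : A) :
    f (f a b c) c d = f a b d := by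
  rw [hf.left_eq_right, h]

theorem cancel_pair_right (hf : TernaryAssoc f) {a b : A} (h : f a b b = a) (c d : A) :
    f a b (f b c d) = f a c d := by
  rw [← hf.left_eq_right, h]

theorem a3L_of_apply_pair_left (hf : TernaryAssoc f) (h : ∀ a b, f b b a = a) : A3L f := by
  intro a b c d
  rw [hf.cancel_pair_left (h d c), hf.cancel_pair_left (h d (f b c d))]

theorem a3R_of_apply_pair_right (hf : TernaryAssoc f) (h : ∀ a b, f a b b = a) : A3R f := by
  intro a b c d
  rw [hf.cancel_pair_right (h a b), hf.cancel_pair_right (h a (f a b c))]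

end TernaryAssoc

theorem stmt7_general (f : A → A → A → A) (hf : TernaryAssoc f)
    (hleft : ∀ b, Function.Injective fun z => f z b b) (hright : ∀ b, Function.Injective (f b b)) :
    ((∀ a : A, f a a a = a) ↔ ((∀ a : A, f a a a = a) ∧ A3L f ∧ A3R f)) ∧
    ((∀ a : A, f a a a = a) ↔ (∀ a b : A, f a b b = a ∧ f b b a = a)) := by
  have malcev (h : ∀ a, f a a a = a) (a b : A) : f a b b = a ∧ f b b a = a :=
    ⟨hf.apply_pair_right_of_idempotent (h b) (hleft b) a,
      hf.apply_pair_left_of_idempotent (h b) (hright b) a⟩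
  refine ⟨⟨fun h => ⟨h, ?_, ?_⟩, And.left⟩, malcev, fun h a => (h a a).1⟩
  · exact hf.a3L_of_apply_pair_left fun a b => (malcev h a b).2
  · exact hf.a3R_of_apply_pair_right fun a b => (malcev h a b).1

/-- For a ternary group, the following are equivalent:
(1) idempotent; (2) idempotent and knot-theoretic; (3) Mal'cev. -/
theorem stmt7 (f : A → A → A → A) (hG : TernaryGroup f) :
    ((∀ a : A, f a a a = a) ↔ ((∀ a : A, f a a a = a) ∧ A3L f ∧ A3R f)) ∧
    ((∀ a : A, f a a a = a) ↔ (∀ a b : A, f a b b = a ∧ f b b a = a)) :=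
  stmt7_general f hG.1 (fun b => hG.2.injective_left b b) (fun b => hG.2.injective_right b b)
end

section
/- Every knot-theoretic ternary group (A,[ ]) is semi-commutative and satisfies [abb] = ā for all a,b ∈ A, where ā denotes the skew element of a. -/
variable {A : Type*}

/-!
Axiom (A3L) forces `[ccd]` to be independent of `c`: given `c`, `e` and `d`, solve `[bcd] = e` for
`b`, and cancel the common prefix in (A3L). Hence `[cca] = [āāa] = ā`, and prefixing two equal pairs
in succession changes nothing. Semi-commutativity follows by cancellation from
`[[abc][cba]a] = [abccbaa] = [abbbbaa] = [aaa] = [[abc][abc]a]`.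
-/

section

variable {f : A → A → A → A}

theorem TernaryAssoc.left_eq_middle (hf : TernaryAssoc f) (a b c d e : A) :
    f (f a b c) d e = f a (f b c d) e :=
  (hf a b c d e).1

theorem TernaryAssoc.middle_eq_right (hf : TernaryAssoc f) (a b c d e : A) :
    f a (f b c d) e = f a b (f c d e) :=
  (hf a b c d e).2

theorem TernaryAssoc.left_eq_right_s9 (hf : TernaryAssoc f) (a b c d e : A) :
    f (f a b c) d e = f a b (f c d e) :=
  (hf.left_eq_middle a b c d e).trans (hf.middle_eq_right a b c d e)

theorem TernaryQuasigroup.middle_cancel (hf : TernaryQuasigroup f) {a b x y : A}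
    (h : f a x b = f a y b) : x = y :=
  (hf.2.1 a b (f a y b)).unique h rfl

theorem TernaryQuasigroup.right_cancel (hf : TernaryQuasigroup f) {a b x y : A}
    (h : f a b x = f a b y) : x = y :=
  (hf.2.2 a b (f a b y)).unique h rfl

namespace TernaryGroup

theorem apply_skew_self (hf : TernaryGroup f) {a s : A} (hs : f a s a = a) (w : A) :
    f w s a = w := by
  obtain ⟨x, hx, -⟩ := hf.2.1 a a w
  calc f w s a = f (f x a a) s a := by rw [hx]
    _ = f x a (f a s a) := hf.1.left_eq_right_s9 x a a s a
    _ = w := by rw [hs, hx]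

theorem skew_self_apply (hf : TernaryGroup f) {a s : A} (hs : f a s a = a) (w : A) :
    f s a w = w := by
  apply hf.2.middle_cancel (a := a) (b := w)
  calc f a (f s a w) w = f (f a s a) w w := (hf.1.left_eq_middle a s a w w).symm
    _ = f a w w := by rw [hs]

end TernaryGroup

/-- In the ternary product `[ccd]`, the equal pair `cc` may be replaced by any other equal pair
`ee`. For ternary groups this is the form in which (A3L) is used. -/
def EqualPairsInterchangeable (f : A → A → A → A) : Prop :=
  ∀ c e d : A, f c c d = f e e d

theorem A3L.equalPairsInterchangeable (hL : A3L f) (hf : TernaryGroup f) :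
    EqualPairsInterchangeable f := by
  intro c e d
  obtain ⟨b, hb, -⟩ := hf.2.1 c d e
  apply hf.2.right_cancel (a := c) (b := b)
  calc f c b (f c c d) = f (f c b c) c d := (hf.1.left_eq_right_s9 c b c c d).symm
    _ = f (f c b e) e d := by rw [hL c b c d, hb]
    _ = f c b (f e e d) := hf.1.left_eq_right_s9 c b e e d

namespace EqualPairsInterchangeable

theorem apply_self_self_eq_skew (hp : EqualPairsInterchangeable f) (hf : TernaryGroup f) {b s : A}
    (hs : f b s b = b) (a : A) : f a a b = s :=
  (hp a s b).trans (hf.apply_skew_self hs s)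

theorem apply_apply_self (hp : EqualPairsInterchangeable f) (hf : TernaryGroup f) (x y w : A) :
    f x x (f y y w) = w := by
  obtain ⟨s, hs, -⟩ := hf.2.2.1 y y y
  calc f x x (f y y w) = f (f x x y) y w := (hf.1.left_eq_right_s9 x x y y w).symm
    _ = f s y w := by rw [hp.apply_self_self_eq_skew hf hs]
    _ = w := hf.skew_self_apply hs w

theorem semiComm (hp : EqualPairsInterchangeable f) (hf : TernaryGroup f) : SemiComm f := by
  intro a b c
  apply hf.2.middle_cancel (a := f a b c) (b := a)
  calc f (f a b c) (f a b c) a = f a a a := hp _ _ _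
    _ = f a (f b b (f b b a)) a := by rw [hp.apply_apply_self hf]
    _ = f a b (f b (f b b a) a) := hf.1.middle_eq_right _ _ _ _ _
    _ = f a b (f b b (f b a a)) := by rw [hf.1.middle_eq_right b b b a a]
    _ = f a b (f c c (f b a a)) := by rw [hp b c]
    _ = f (f a b c) c (f b a a) := (hf.1.left_eq_right_s9 _ _ _ _ _).symm
    _ = f (f a b c) (f c b a) a := (hf.1.middle_eq_right _ _ _ _ _).symm

end EqualPairsInterchangeable

theorem stmt9_general (hf : TernaryGroup f) (hL : A3L f) {sk : A → A} (hsk : IsSkew f sk) :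
    SemiComm f ∧ ∀ a b : A, f a b b = sk a := by
  have hp : EqualPairsInterchangeable f := hL.equalPairsInterchangeable hf
  have hcomm : SemiComm f := hp.semiComm hf
  refine ⟨hcomm, fun a b => ?_⟩
  rw [hcomm a b b, hp.apply_self_self_eq_skew hf (hsk a)]

end

/-- Every knot-theoretic ternary group is semi-commutative and
satisfies [abb] = ā. -/
theorem stmt9 (f : A → A → A → A) (hK : KnotTheoretic f)
    (sk : A → A) (hsk : IsSkew f sk) :
    SemiComm f ∧ ∀ a b : A, f a b b = sk a :=
  stmt9_general hK.1 hK.2.1 hsk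
end
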